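/- arXiv:1703.10846 — 2 statements merged into one kernel-verified Lean document; each statement's English description precedes it below -/
import Mathlib

section
/- Let t and n be positive integers with t ≤ n, and let N denote the number of n×n partial Latin rectangles based on n symbols in which every row contains exactly t entries, every column contains exactly t entries, and there are exactly t symbols each of which occurs exactly n times (all other symbols occurring zero times). Then t^{t·n} · N ≥ (n!)^t · (t!)^n. -/
open Finset

/-- `E` is (the entry set of) an `r × s` partial Latin rectangle based on `n` symbols:
no two distinct triples agree in both their first and second coordinates, in both their
first and third coordinates, or in both their second and third coordinates. -/
def IsPLR {r s n : ℕ} (E : Finset (Fin r × Fin s × Fin n)) : Prop :=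
  ∀ e ∈ E, ∀ e' ∈ E, e ≠ e' →
    ¬(e.1 = e'.1 ∧ e.2.1 = e'.2.1) ∧
    ¬(e.1 = e'.1 ∧ e.2.2 = e'.2.2) ∧
    ¬(e.2.1 = e'.2.1 ∧ e.2.2 = e'.2.2)

/-- The number of entries of `E` in row `i`. -/
def rowType {r s n : ℕ} (E : Finset (Fin r × Fin s × Fin n)) (i : Fin r) : ℕ :=
  (E.filter (fun e => e.1 = i)).card

/-- The number of entries of `E` in column `j`. -/
def colType {r s n : ℕ} (E : Finset (Fin r × Fin s × Fin n)) (j : Fin s) : ℕ :=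
  (E.filter (fun e => e.2.1 = j)).card

/-- The number of occurrences of symbol `k` in `E`. -/
def symType {r s n : ℕ} (E : Finset (Fin r × Fin s × Fin n)) (k : Fin n) : ℕ :=
  (E.filter (fun e => e.2.2 = k)).card


open Polynomial in
theorem vw_amgm (s : Multiset ℝ) (hs : ∀ x ∈ s, 0 ≤ x) (a : ℝ) (ha : 0 < a) :
    s.prod ≤ a ^ s.card * Real.exp (s.sum / a - s.card) := by
  induction s using Multiset.induction_on with
  | empty => simp
  | cons x s ih =>
    have h1 := ih (fun y hy => hs y (Multiset.mem_cons_of_mem hy))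
    have hx := hs x (Multiset.mem_cons_self x s)
    have h2 : x ≤ a * Real.exp (x / a - 1) := by
      have := Real.add_one_le_exp (x / a - 1)
      have h3 : x = a * (x / a) := by field_simp
      calc x = a * (x / a) := h3
        _ ≤ _ := by gcongr; linarith
    rw [Multiset.prod_cons, Multiset.card_cons, Multiset.sum_cons]
    have h4 : 0 ≤ s.prod := Multiset.prod_nonneg (fun y hy => hs y (Multiset.mem_cons_of_mem hy))
    calc x * s.prod ≤ (a * Real.exp (x / a - 1)) * (a ^ s.card * Real.exp (s.sum / a - s.card)) := by
          gcongr
      _ = a ^ (s.card + 1) * (Real.exp (x / a - 1) * Real.exp (s.sum / a - s.card)) := by ring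
      _ = _ := by
          rw [← Real.exp_add]; congr 2; push_cast; ring

open Polynomial in
theorem vw_univ (f : ℂ[X]) (k : ℕ) (hk : 0 < k) (hdeg : f.natDegree = k + 1)
    (hroots : ∀ r ∈ f.roots, r.im = 0 ∧ r.re < 0) (C : ℝ)
    (hC : ∀ t : ℝ, 0 < t → C * t ≤ ‖f.eval (t : ℂ)‖) :
    C * ((k : ℝ) / (k + 1)) ^ k ≤ ‖f.coeff 1‖ := by
  have hf0 : f ≠ 0 := by rintro rfl; simp at hdeg
  have hsp : f.Splits := IsAlgClosed.splits f
  have hcard : f.roots.card = k + 1 := by rw [← hsp.natDegree_eq_card_roots, hdeg]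
  set g : ℂ → ℝ := fun r => -(1 / r.re) with hg
  have hgpos : ∀ r ∈ f.roots, 0 < g r := fun r hr => by
    have := (hroots r hr).2
    simp only [hg]
    have := one_div_neg.2 this
    linarith
  have hr : ∀ r ∈ f.roots, r = (r.re : ℂ) := fun r hr => by
    apply Complex.ext <;> simp [(hroots r hr).1]
  set σ : ℝ := (f.roots.map g).sum with hσ
  have hev0 : f.eval 0 ≠ 0 := by
    intro h
    have := (hroots 0 ((mem_roots hf0).2 h)).2
    simp at this
  have hσpos : 0 < σ := by
    obtain ⟨r, hr⟩ := Multiset.card_pos_iff_exists_mem.1 (by rw [hcard]; omega : 0 < f.roots.card)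
    obtain ⟨M, hM⟩ := Multiset.exists_cons_of_mem hr
    rw [hσ, hM, Multiset.map_cons, Multiset.sum_cons]
    have h1 := hgpos r hr
    have h2 : 0 ≤ (M.map g).sum := by
      apply Multiset.sum_nonneg
      intro x hx
      obtain ⟨y, hy, rfl⟩ := Multiset.mem_map.1 hx
      exact (hgpos y (by rw [hM]; exact Multiset.mem_cons_of_mem hy)).le
    linarith
  have hc1 : f.coeff 1 = f.eval 0 * σ := by
    have h := hsp.eval_derivative_div_eval_of_ne_zero hev0
    have h2 : f.derivative.eval 0 = f.coeff 1 := by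
      rw [← coeff_zero_eq_eval_zero, coeff_derivative]; simp
    rw [h2] at h
    have h3 : (f.roots.map fun z => 1 / (0 - z)).sum = (σ : ℂ) := by
      rw [hσ]
      have : ((f.roots.map g).sum : ℂ) = ((f.roots.map g).map (fun x : ℝ => (x : ℂ))).sum :=
        map_multiset_sum Complex.ofRealHom _
      rw [this, Multiset.map_map]
      congr 1
      apply Multiset.map_congr rfl
      intro x hx
      rw [hr x hx]
      simp [hg]
    rw [h3] at h
    rw [← h]; field_simp
  have hevt : ∀ t : ℝ, 0 < t → ‖f.eval (t : ℂ)‖ = ‖f.eval 0‖ * (f.roots.map (fun r => 1 + t * g r)).prod := by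
    intro t ht
    have h1 : f.eval (t : ℂ) = f.eval 0 * (((f.roots.map (fun r => 1 + t * g r)).prod : ℝ) : ℂ) := by
      have : (((f.roots.map (fun r => 1 + t * g r)).prod : ℝ) : ℂ) = ((f.roots.map (fun r => 1 + t * g r)).map (fun x : ℝ => (x : ℂ))).prod :=
        map_multiset_prod Complex.ofRealHom _
      rw [hsp.eval_eq_prod_roots, hsp.eval_eq_prod_roots 0, this, Multiset.map_map, mul_assoc,
        ← Multiset.prod_map_mul]
      congr 2
      apply Multiset.map_congr rfl
      intro x hx
      have hx0 : (x.re : ℂ) ≠ 0 := by exact_mod_cast (hroots x hx).2.ne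
      rw [hr x hx]
      simp only [hg, Function.comp, Complex.ofReal_re]
      push_cast
      field_simp
      ring
    rw [h1, norm_mul, Complex.norm_real, Real.norm_of_nonneg]
    apply Multiset.prod_nonneg
    intro x hx
    obtain ⟨y, hy, rfl⟩ := Multiset.mem_map.1 hx
    have := hgpos y hy
    positivity
  have hkr : (0 : ℝ) < k := by exact_mod_cast hk
  set t : ℝ := (k + 1) / (k * σ) with ht
  have htpos : 0 < t := by positivity
  have hb := vw_amgm (f.roots.map (fun r => 1 + t * g r)) (by
    intro x hx
    obtain ⟨y, hy, rfl⟩ := Multiset.mem_map.1 hx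
    have := hgpos y hy
    positivity) (((k : ℝ) + 1) / k) (by positivity)
  have hsum : (f.roots.map (fun r => 1 + t * g r)).sum = (k + 1) + t * σ := by
    rw [Multiset.sum_map_add, Multiset.sum_map_mul_left]
    simp [hcard, hσ]; ring
  rw [hsum, Multiset.card_map, hcard] at hb
  have hex : ((k : ℝ) + 1 + t * σ) / (((k : ℝ) + 1) / k) - ((k + 1 : ℕ) : ℝ) = 0 := by
    rw [ht]; push_cast; field_simp; ring
  rw [hex, Real.exp_zero, mul_one] at hb
  have h1 := hC t htpos
  rw [hevt t htpos] at h1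
  have h2 : C * t ≤ ‖f.eval 0‖ * (((k : ℝ) + 1) / k) ^ (k + 1) :=
    h1.trans (by gcongr)
  rw [hc1, norm_mul, Complex.norm_real, Real.norm_of_nonneg hσpos.le]
  have h3 : C * ((k : ℝ) / (k + 1)) ^ k = (C * t) * (((k : ℝ) / (k + 1)) ^ (k + 1) * σ) := by
    rw [ht, pow_succ]; field_simp
  have h4 : ‖f.eval 0‖ * σ = (‖f.eval 0‖ * (((k : ℝ) + 1) / k) ^ (k + 1)) * (((k : ℝ) / (k + 1)) ^ (k + 1) * σ) := by
    rw [div_pow, div_pow]; field_simp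
  rw [h3, h4]
  gcongr

theorem vw_homog_eval {σ : Type*} [Fintype σ] {m : ℕ} {p : MvPolynomial σ ℂ} (hp : p.IsHomogeneous m)
    (c : ℂ) (x : σ → ℂ) :
    MvPolynomial.eval (fun i => c * x i) p = c ^ m * MvPolynomial.eval x p := by
  rw [MvPolynomial.eval_eq', MvPolynomial.eval_eq', Finset.mul_sum]
  apply Finset.sum_congr rfl
  intro d hd
  have h : d.degree = m := by
    by_contra h
    exact (MvPolynomial.mem_support_iff.1 hd) (hp.coeff_eq_zero h)
  have h2 : ∏ i, (c * x i) ^ d i = c ^ m * ∏ i, x i ^ d i := by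
    simp_rw [mul_pow]
    rw [Finset.prod_mul_distrib, Finset.prod_pow_eq_pow_sum, ← h, Finsupp.degree_eq_sum]
  rw [h2]; ring

/-- Strictly stable homogeneous polynomials of degree `k` in `k` variables with capacity at
least `C`. -/
def VW (k : ℕ) (C : ℝ) (p : MvPolynomial (Fin k) ℂ) : Prop :=
  p.IsHomogeneous k ∧
  (∀ z : Fin k → ℂ, (∀ i, 0 ≤ (z i).re) → (∃ i, 0 < (z i).re) → MvPolynomial.eval z p ≠ 0) ∧
  ∀ x : Fin k → ℝ, (∀ i, 0 < x i) → C * ∏ i, x i ≤ ‖MvPolynomial.eval (fun i => (x i : ℂ)) p‖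

theorem vw_deg {k : ℕ} {C : ℝ} {p : MvPolynomial (Fin (k + 1)) ℂ} (h : VW (k + 1) C p)
    (z : Fin k → ℂ) :
    (Polynomial.map (MvPolynomial.eval z) (MvPolynomial.finSuccEquiv ℂ k p)).natDegree = k + 1 := by
  obtain ⟨hh, hs, -⟩ := h
  have hle : (MvPolynomial.finSuccEquiv ℂ k p).natDegree ≤ k + 1 := by
    rw [MvPolynomial.natDegree_finSuccEquiv]
    exact (MvPolynomial.degreeOf_le_totalDegree _ _).trans hh.totalDegree_le
  have h1 : MvPolynomial.eval (Fin.cons 1 (fun _ => 0) : Fin (k + 1) → ℂ) p ≠ 0 := by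
    apply hs
    · intro i
      refine Fin.cases ?_ (fun j => ?_) i <;> simp
    · exact ⟨0, by simp⟩
  have hz : ∀ w : Fin k → ℂ, MvPolynomial.eval w ((MvPolynomial.finSuccEquiv ℂ k p).coeff (k + 1)) =
      MvPolynomial.coeff 0 ((MvPolynomial.finSuccEquiv ℂ k p).coeff (k + 1)) := by
    intro w
    have := hh.finSuccEquiv_coeff_isHomogeneous (k + 1) 0 rfl
    rw [← MvPolynomial.totalDegree_zero_iff_isHomogeneous] at this
    rw [MvPolynomial.totalDegree_eq_zero_iff_eq_C.1 this]
    simp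
  have h2 : MvPolynomial.coeff 0 ((MvPolynomial.finSuccEquiv ℂ k p).coeff (k + 1)) ≠ 0 := by
    rw [MvPolynomial.eval_eq_eval_mv_eval', Polynomial.eval_eq_sum_range' (n := k + 2)] at h1
    · rw [Finset.sum_range_succ, Finset.sum_eq_zero] at h1
      · rw [Polynomial.coeff_map, hz, one_pow, mul_one, zero_add] at h1
        exact h1
      · intro i hi
        have hi' : i < k + 1 := Finset.mem_range.1 hi
        have h3 := hh.finSuccEquiv_coeff_isHomogeneous i (k + 1 - i) (by omega)
        have h4 := vw_homog_eval h3 0 (fun _ => 0)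
        rw [zero_pow (by omega)] at h4
        simp only [zero_mul] at h4
        rw [Polynomial.coeff_map, h4, zero_mul]
    · exact lt_of_le_of_lt (Polynomial.natDegree_map_le) (by omega)
  apply le_antisymm
  · exact Polynomial.natDegree_map_le.trans hle
  · apply Polynomial.le_natDegree_of_ne_zero
    rw [Polynomial.coeff_map, hz]
    exact h2

/-- A number off the closed negative half-line can be rotated together with `1` into the open right
half plane. -/
theorem vw_rot (r : ℂ) (h : ¬(r.im = 0 ∧ r.re ≤ 0)) : ∃ a : ℂ, 0 < a.re ∧ 0 < (a * r).re := by
  by_cases hr : 0 < r.re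
  · exact ⟨1, by simp, by simpa using hr⟩
  · have him : r.im ≠ 0 := fun h0 => h ⟨h0, not_lt.1 hr⟩
    refine ⟨⟨1, -((1 - r.re) / r.im)⟩, by simp, ?_⟩
    have : ((1 - r.re) / r.im) * r.im = 1 - r.re := by field_simp
    simp only [Complex.mul_re]
    linarith

theorem vw_step {k : ℕ} {C : ℝ} {p : MvPolynomial (Fin (k + 1)) ℂ} (h : VW (k + 1) C p) :
    VW k (C * ((k : ℝ) / (k + 1)) ^ k) ((MvPolynomial.finSuccEquiv ℂ k p).coeff 1) := by
  have hdeg := fun z => vw_deg h z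
  obtain ⟨hh, hs, hc⟩ := h
  refine ⟨hh.finSuccEquiv_coeff_isHomogeneous 1 k (by omega), ?_, ?_⟩
  · intro z hz0 hz1
    set f := Polynomial.map (MvPolynomial.eval z) (MvPolynomial.finSuccEquiv ℂ k p) with hf
    have hev : ∀ y : ℂ, 0 ≤ y.re → f.eval y ≠ 0 := by
      intro y hy
      rw [hf, ← MvPolynomial.eval_eq_eval_mv_eval']
      apply hs
      · intro i
        refine Fin.cases ?_ (fun j => ?_) i
        · simpa using hy
        · simpa using hz0 j
      · obtain ⟨j, hj⟩ := hz1
        exact ⟨j.succ, by simpa using hj⟩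
    have hf0 : f ≠ 0 := by
      intro h0
      have := hdeg z
      rw [← hf, h0] at this
      simp at this
    have hev0 := hev 0 (by simp)
    have hsp : f.Splits := IsAlgClosed.splits f
    have hcard : f.roots.card = k + 1 := by rw [← hsp.natDegree_eq_card_roots, hdeg]
    have h1 := hsp.eval_derivative_eq_eval_mul_sum hev0
    have h2 : f.derivative.eval 0 = f.coeff 1 := by
      rw [← Polynomial.coeff_zero_eq_eval_zero, Polynomial.coeff_derivative]; simp
    have h3 : f.coeff 1 = MvPolynomial.eval z ((MvPolynomial.finSuccEquiv ℂ k p).coeff 1) := by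
      rw [hf, Polynomial.coeff_map]
    rw [← h3, ← h2, h1]
    refine mul_ne_zero hev0 ?_
    have hroot : ∀ r ∈ f.roots, 0 < (1 / (0 - r)).re := by
      intro r hr
      have h4 : f.eval r = 0 := (Polynomial.mem_roots hf0).1 hr
      have h5 : r.re < 0 := by
        by_contra h6
        exact hev r (not_lt.1 h6) h4
      have h7 : r ≠ 0 := by rintro rfl; simp at h5
      have h8 : 0 < Complex.normSq r := Complex.normSq_pos.2 h7
      simp only [zero_sub, one_div, Complex.inv_re, Complex.neg_re, Complex.normSq_neg]
      apply div_pos <;> linarith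
    intro h0
    have h9 : ((f.roots.map fun z => 1 / (0 - z)).sum).re = (f.roots.map fun z => (1 / (0 - z)).re).sum := by
      have := map_multiset_sum Complex.reAddGroupHom (f.roots.map fun z => 1 / (0 - z))
      rw [Multiset.map_map] at this
      exact this
    rw [h0] at h9
    obtain ⟨r, hr⟩ := Multiset.card_pos_iff_exists_mem.1 (by rw [hcard]; omega : 0 < f.roots.card)
    obtain ⟨M, hM⟩ := Multiset.exists_cons_of_mem hr
    rw [hM, Multiset.map_cons, Multiset.sum_cons] at h9
    have h10 := hroot r hr
    have h11 : 0 ≤ (M.map fun z => (1 / (0 - z)).re).sum := by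
      apply Multiset.sum_nonneg
      intro x hx
      obtain ⟨y, hy, rfl⟩ := Multiset.mem_map.1 hx
      exact (hroot y (by rw [hM]; exact Multiset.mem_cons_of_mem hy)).le
    simp only [Complex.zero_re] at h9
    linarith
  · intro x hx
    set z : Fin k → ℂ := fun i => (x i : ℂ) with hz
    set f := Polynomial.map (MvPolynomial.eval z) (MvPolynomial.finSuccEquiv ℂ k p) with hf
    have h3 : f.coeff 1 = MvPolynomial.eval z ((MvPolynomial.finSuccEquiv ℂ k p).coeff 1) := by
      rw [hf, Polynomial.coeff_map]
    rw [← h3]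
    have hC : ∀ t : ℝ, 0 < t → (C * ∏ i, x i) * t ≤ ‖f.eval (t : ℂ)‖ := by
      intro t ht
      have h1 := hc (Fin.cons t x) (by
        intro i
        refine Fin.cases ?_ (fun j => ?_) i
        · simpa using ht
        · simpa using hx j)
      rw [Fin.prod_univ_succ] at h1
      simp only [Fin.cons_zero, Fin.cons_succ] at h1
      rw [hf, ← MvPolynomial.eval_eq_eval_mv_eval']
      have h2 : (fun i => ((Fin.cons t x : Fin (k + 1) → ℝ) i : ℂ)) = Fin.cons (t : ℂ) z := by
        funext i
        refine Fin.cases ?_ (fun j => ?_) i <;> simp [hz]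
      rw [h2] at h1
      linarith
    have hd := hdeg z
    rw [← hf] at hd
    rcases Nat.eq_zero_or_pos k with hk | hk
    · subst hk
      have h1 := hC 1 one_pos
      have h2 : ‖f.coeff 0‖ = 0 := by
        have h4 := (hh.finSuccEquiv_coeff_isHomogeneous 0 1 (by omega))
        rw [hf, Polynomial.coeff_map]
        have h5 := vw_homog_eval h4 0 z
        have h6 : (fun i => 0 * z i) = z := by funext i; exact i.elim0
        rw [h6] at h5
        rw [h5]; simp
      have h2' := norm_eq_zero.1 h2
      rw [Polynomial.eval_eq_sum_range, hd] at h1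
      simp [Finset.sum_range_succ, h2'] at h1
      simpa using h1
    · have := vw_univ f k hk hd (fun r hr => ?_) _ hC
      · calc _ = _ := by ring
          _ ≤ _ := this
      · have hf0 : f ≠ 0 := by
          intro h0
          rw [h0] at hd
          simp at hd
        have h4 : f.eval r = 0 := (Polynomial.mem_roots hf0).1 hr
        rw [hf, ← MvPolynomial.eval_eq_eval_mv_eval'] at h4
        by_contra hcon
        by_cases hr0 : r = 0
        · refine hs _ ?_ ?_ h4
          · intro i
            refine Fin.cases ?_ (fun j => ?_) i
            · simp [hr0]
            · simpa [hz] using (hx j).le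
          · exact ⟨Fin.succ ⟨0, hk⟩, by rw [Fin.cons_succ]; simpa [hz] using hx _⟩
        · obtain ⟨a, ha1, ha2⟩ := vw_rot r (by
            rintro ⟨hi, hre⟩
            apply hcon
            refine ⟨hi, lt_of_le_of_ne hre ?_⟩
            intro h0
            exact hr0 (Complex.ext h0 hi))
          have h5 := vw_homog_eval hh a (Fin.cons r z)
          rw [h4, mul_zero] at h5
          refine hs _ ?_ ?_ h5
          · intro i
            refine Fin.cases ?_ (fun j => ?_) i
            · simpa using ha2.le
            · simpa [hz] using (mul_pos ha1 (hx j)).le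
          · exact ⟨0, by simpa using ha2⟩

theorem vw_coeff (k : ℕ) : ∀ (C : ℝ) (p : MvPolynomial (Fin k) ℂ), VW k C p →
    C * ((k.factorial : ℝ) / k ^ k) ≤ ‖p.coeff (Finsupp.equivFunOnFinite.symm fun _ => 1)‖ := by
  induction k with
  | zero =>
    intro C p h
    have := h.2.2 (fun _ => 1) (by simp)
    rw [MvPolynomial.eq_C_of_isEmpty p] at this ⊢
    have h0 : (Finsupp.equivFunOnFinite.symm fun _ => 1 : Fin 0 →₀ ℕ) = 0 := Subsingleton.elim _ _
    rw [h0]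
    simpa using this
  | succ k ih =>
    intro C p h
    have h1 := ih _ _ (vw_step h)
    rw [MvPolynomial.finSuccEquiv_coeff_coeff] at h1
    have h2 : (Finsupp.cons 1 (Finsupp.equivFunOnFinite.symm fun _ => 1) : Fin (k + 1) →₀ ℕ) =
        Finsupp.equivFunOnFinite.symm fun _ => 1 := by
      ext i
      refine Fin.cases ?_ (fun j => ?_) i <;> simp
    rw [h2] at h1
    refine le_trans (le_of_eq ?_) h1
    rw [mul_assoc]
    congr 1
    rcases Nat.eq_zero_or_pos k with hk | hk
    · subst hk; simp
    · have hkr : (0 : ℝ) < k := by exact_mod_cast hk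
      rw [Nat.factorial_succ]
      push_cast
      rw [div_pow, pow_succ]
      field_simp

theorem vw_coeff_prod (n : ℕ) (A : Fin n → Fin n → ℂ) :
    (∏ i, ∑ j, MvPolynomial.C (A i j) * (MvPolynomial.X j : MvPolynomial (Fin n) ℂ)).coeff
      (Finsupp.equivFunOnFinite.symm fun _ => 1) = ∑ σ : Equiv.Perm (Fin n), ∏ i, A i (σ i) := by
  classical
  rw [Finset.prod_univ_sum, Fintype.piFinset_univ, MvPolynomial.coeff_sum]
  symm
  have key : ∀ f : Fin n → Fin n,
      (∏ i, (MvPolynomial.C (A i (f i)) * (MvPolynomial.X (f i) : MvPolynomial (Fin n) ℂ))) =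
      MvPolynomial.monomial (∑ i, Finsupp.single (f i) 1) (∏ i, A i (f i)) := by
    intro f
    rw [MvPolynomial.monomial_sum_index]
    rw [Finset.prod_mul_distrib, map_prod]
    rfl
  apply Finset.sum_of_injOn (fun σ : Equiv.Perm (Fin n) => (σ : Fin n → Fin n))
  · intro a _ b _ h
    exact DFunLike.coe_injective h
  · intro a _; simp
  · intro f _ hf
    rw [key, MvPolynomial.coeff_monomial, if_neg]
    intro h
    apply hf
    have hsurj : Function.Surjective f := by
      intro j
      by_contra hj
      push Not at hj
      have h1 := DFunLike.congr_fun h j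
      rw [Finsupp.finsetSum_apply, Finset.sum_eq_zero] at h1
      · simp at h1
      · intro i _
        rw [Finsupp.single_eq_of_ne (hj i).symm]
    exact ⟨Equiv.ofBijective f (Finite.injective_iff_bijective.1 (Finite.injective_iff_surjective.2 hsurj)), by simp, rfl⟩
  · intro σ _
    rw [key, MvPolynomial.coeff_monomial, if_pos]
    ext j
    rw [Finsupp.finsetSum_apply, Finset.sum_eq_single (σ.symm j)]
    · simp
    · intro b _ hb
      rw [Finsupp.single_eq_of_ne]
      rintro rfl
      simp at hb
    · simp

theorem vw_pos (n : ℕ) (A : Fin n → Fin n → ℝ) (hA : ∀ i j, 0 < A i j) (s : ℝ) (hs : 0 < s)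
    (hrow : ∀ i, ∑ j, A i j = s) (hcol : ∀ j, ∑ i, A i j = s) :
    s ^ n * ((n.factorial : ℝ) / n ^ n) ≤ ∑ σ : Equiv.Perm (Fin n), ∏ i, A i (σ i) := by
  set p : MvPolynomial (Fin n) ℂ :=
    ∏ i, ∑ j, MvPolynomial.C (A i j : ℂ) * (MvPolynomial.X j : MvPolynomial (Fin n) ℂ) with hp
  have hev : ∀ z, MvPolynomial.eval z p = ∏ i, ∑ j, (A i j : ℂ) * z j := by
    intro z; simp [hp]
  have hVW : VW n (s ^ n) p := by
    refine ⟨?_, ?_, ?_⟩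
    · have := MvPolynomial.IsHomogeneous.prod Finset.univ
        (fun i => ∑ j, MvPolynomial.C (A i j : ℂ) * (MvPolynomial.X j : MvPolynomial (Fin n) ℂ))
        (fun _ => 1) (fun i _ => MvPolynomial.IsHomogeneous.sum _ _ _
          (fun j _ => MvPolynomial.isHomogeneous_C_mul_X _ _))
      simpa using this
    · intro z hz0 ⟨j, hj⟩
      rw [hev, Finset.prod_ne_zero_iff]
      intro i _ h0
      have h1 := congrArg Complex.re h0
      rw [Complex.re_sum] at h1
      simp only [Complex.re_ofReal_mul, Complex.zero_re] at h1
      have : 0 < ∑ j, A i j * (z j).re := by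
        apply Finset.sum_pos' (fun k _ => mul_nonneg (hA i k).le (hz0 k))
        exact ⟨j, by simp, mul_pos (hA i j) hj⟩
      linarith
    · intro x hx
      have h1 : MvPolynomial.eval (fun i => (x i : ℂ)) p = ((∏ i, ∑ j, A i j * x j : ℝ) : ℂ) := by
        rw [hev]; push_cast; rfl
      have hnn : ∀ i, 0 ≤ ∑ j, A i j * x j := fun i =>
        Finset.sum_nonneg fun j _ => mul_nonneg (hA i j).le (hx j).le
      rw [h1, Complex.norm_real, Real.norm_of_nonneg (Finset.prod_nonneg fun i _ => hnn i)]
      have h2 : ∀ i, s * ∏ j, x j ^ (A i j / s) ≤ ∑ j, A i j * x j := by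
        intro i
        have h3 := Real.geom_mean_le_arith_mean_weighted Finset.univ (fun j => A i j / s) x
          (fun j _ => (div_pos (hA i j) hs).le) (by rw [← Finset.sum_div, hrow, div_self hs.ne'])
          (fun j _ => (hx j).le)
        calc s * ∏ j, x j ^ (A i j / s) ≤ s * ∑ j, A i j / s * x j := by gcongr
          _ = _ := by
            rw [Finset.mul_sum]
            apply Finset.sum_congr rfl
            intro j _
            field_simp
      have h4 : ∏ i : Fin n, (s * ∏ j, x j ^ (A i j / s)) = s ^ n * ∏ j, x j := by
        rw [Finset.prod_mul_distrib, Finset.prod_comm]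
        congr 1
        · simp
        · apply Finset.prod_congr rfl
          intro j _
          rw [← Real.rpow_sum_of_pos (hx j), ← Finset.sum_div, hcol, div_self hs.ne', Real.rpow_one]
      rw [← h4]
      apply Finset.prod_le_prod
      · intro i _
        exact mul_nonneg hs.le (Finset.prod_nonneg fun j _ => Real.rpow_nonneg (hx j).le _)
      · intro i _; exact h2 i
  have h := vw_coeff n _ p hVW
  rw [hp, vw_coeff_prod n (fun i j => (A i j : ℂ))] at h
  have h1 : (∑ σ : Equiv.Perm (Fin n), ∏ i, (A i (σ i) : ℂ)) =
      ((∑ σ : Equiv.Perm (Fin n), ∏ i, A i (σ i) : ℝ) : ℂ) := by push_cast; rfl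
  rw [h1, Complex.norm_real, Real.norm_of_nonneg] at h
  · exact h
  · exact Finset.sum_nonneg fun σ _ => Finset.prod_nonneg fun i _ => (hA _ _).le

/-- The van der Waerden bound for nonnegative matrices with constant line sums. -/
theorem vw_nonneg (n : ℕ) (A : Fin n → Fin n → ℝ) (hA : ∀ i j, 0 ≤ A i j) (s : ℝ) (hs : 0 ≤ s)
    (hrow : ∀ i, ∑ j, A i j = s) (hcol : ∀ j, ∑ i, A i j = s) :
    s ^ n * ((n.factorial : ℝ) / n ^ n) ≤ ∑ σ : Equiv.Perm (Fin n), ∏ i, A i (σ i) := by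
  rcases Nat.eq_zero_or_pos n with hn | hn
  · subst hn; simp
  have hnr : (0 : ℝ) < n := by exact_mod_cast hn
  have hcont : Continuous fun e : ℝ => ∑ σ : Equiv.Perm (Fin n), ∏ i, (A i (σ i) + e) := by fun_prop
  have ht : Filter.Tendsto (fun e : ℝ => ∑ σ : Equiv.Perm (Fin n), ∏ i, (A i (σ i) + e))
      (nhdsWithin 0 (Set.Ioi 0)) (nhds (∑ σ : Equiv.Perm (Fin n), ∏ i, A i (σ i))) := by
    have := (hcont.tendsto 0).mono_left (nhdsWithin_le_nhds (s := Set.Ioi 0))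
    simpa using this
  refine ge_of_tendsto ht ?_
  filter_upwards [self_mem_nhdsWithin] with e he
  have he' : 0 < e := he
  have h := vw_pos n (fun i j => A i j + e) (fun i j => add_pos_of_nonneg_of_pos (hA i j) he')
    (s + n * e) (by positivity) (fun i => by rw [Finset.sum_add_distrib, hrow]; simp)
    (fun j => by rw [Finset.sum_add_distrib, hcol]; simp)
  refine le_trans ?_ h
  gcongr
  have : 0 < n * e := by positivity
  linarith

/-- Ordered `k`-tuples of pairwise disjoint permutations (that is, `k × n` Latin rectangles). -/
abbrev LR (n k : ℕ) : Type :=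
  {f : Fin k → Equiv.Perm (Fin n) // ∀ a b, a ≠ b → ∀ i, f a i ≠ f b i}

open Classical in
theorem lr_ext (n k : ℕ) (hk : k ≤ n) (f : LR n k) :
    n.factorial * (n - k) ^ n ≤
      n ^ n * Fintype.card {σ : Equiv.Perm (Fin n) // ∀ a i, σ i ≠ f.1 a i} := by
  obtain ⟨f, hf⟩ := f
  have h := vw_nonneg n (fun i j => if ∃ a, f a i = j then 0 else 1)
    (fun i j => by split_ifs <;> simp) ((n - k : ℕ) : ℝ) (Nat.cast_nonneg _) ?_ ?_
  · have h1 : (∑ σ : Equiv.Perm (Fin n), ∏ i, (if ∃ a, f a i = σ i then (0 : ℝ) else 1)) =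
        (Fintype.card {σ : Equiv.Perm (Fin n) // ∀ a i, σ i ≠ f a i} : ℝ) := by
      rw [Fintype.card_subtype, Finset.card_filter]
      push_cast
      apply Finset.sum_congr rfl
      intro σ _
      split_ifs with hσ
      · apply Finset.prod_eq_one
        intro i _
        rw [if_neg]
        rintro ⟨a, ha⟩
        exact hσ a i ha.symm
      · push Not at hσ
        obtain ⟨a, i, hai⟩ := hσ
        apply Finset.prod_eq_zero (Finset.mem_univ i)
        rw [if_pos ⟨a, hai.symm⟩]
    rw [h1] at h
    rcases Nat.eq_zero_or_pos n with hn | hn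
    · subst hn; simpa using h
    have hnr : (0 : ℝ) < (n : ℝ) ^ n := by positivity
    rw [← mul_div_assoc, div_le_iff₀ hnr] at h
    have h2 : (n - k) ^ n * n.factorial ≤
        Fintype.card {σ : Equiv.Perm (Fin n) // ∀ a i, σ i ≠ f a i} * n ^ n := by exact_mod_cast h
    linarith
  · intro i
    have h1 : (Finset.univ.filter (fun j => ∃ a, f a i = j)).card = k := by
      have : (Finset.univ.filter (fun j => ∃ a, f a i = j)) = Finset.univ.image (fun a => f a i) := by
        ext j; simp
      rw [this, Finset.card_image_of_injective, Finset.card_univ, Fintype.card_fin]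
      intro a b hab
      by_contra hne
      exact hf a b hne i hab
    have h2 := Finset.card_filter_add_card_filter_not (s := (Finset.univ : Finset (Fin n))) (fun j => ∃ a, f a i = j)
    rw [h1, Finset.card_univ, Fintype.card_fin] at h2
    have h3 : (Finset.univ.filter (fun j => ¬ ∃ a, f a i = j)).card = n - k := by omega
    rw [← h3, Finset.card_filter]
    push_cast
    apply Finset.sum_congr rfl
    intro j _
    by_cases hj : ∃ a, f a i = j <;> simp only [hj, if_true, if_false, not_true, not_false_iff]
  · intro j
    have h1 : (Finset.univ.filter (fun i => ∃ a, f a i = j)).card = k := by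
      have : (Finset.univ.filter (fun i => ∃ a, f a i = j)) = Finset.univ.image (fun a => (f a).symm j) := by
        ext i
        simp only [Finset.mem_filter, Finset.mem_univ, true_and, Finset.mem_image,
          Equiv.symm_apply_eq]
        exact ⟨fun ⟨a, ha⟩ => ⟨a, ha.symm⟩, fun ⟨a, ha⟩ => ⟨a, ha.symm⟩⟩
      rw [this, Finset.card_image_of_injective, Finset.card_univ, Fintype.card_fin]
      intro a b hab
      by_contra hne
      apply hf a b hne ((f a).symm j)
      simp only at hab
      rw [Equiv.apply_symm_apply, hab, Equiv.apply_symm_apply]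
    have h2 := Finset.card_filter_add_card_filter_not (s := (Finset.univ : Finset (Fin n))) (fun i => ∃ a, f a i = j)
    rw [h1, Finset.card_univ, Fintype.card_fin] at h2
    have h3 : (Finset.univ.filter (fun i => ¬ ∃ a, f a i = j)).card = n - k := by omega
    rw [← h3, Finset.card_filter]
    push_cast
    apply Finset.sum_congr rfl
    intro i _
    by_cases hj : ∃ a, f a i = j <;> simp only [hj, if_true, if_false, not_true, not_false_iff]

open Classical in
theorem lr_succ (n k : ℕ) (hk : k ≤ n) :
    (n.factorial * (n - k) ^ n) * Fintype.card (LR n k) ≤ n ^ n * Fintype.card (LR n (k + 1)) := by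
  let F : (Σ f : LR n k, {σ : Equiv.Perm (Fin n) // ∀ a i, σ i ≠ f.1 a i}) → LR n (k + 1) :=
    fun x => ⟨Fin.cons x.2.1 x.1.1, by
      intro a b
      refine Fin.cases ?_ (fun a' => ?_) a <;> refine Fin.cases ?_ (fun b' => ?_) b
      · intro h; exact absurd rfl h
      · intro _ i; simpa using x.2.2 b' i
      · intro _ i; simpa using (x.2.2 a' i).symm
      · intro h i
        simpa using x.1.2 a' b' (fun h' => h (by rw [h'])) i⟩
  have hF : Function.Injective F := by
    rintro ⟨⟨f, hf⟩, ⟨σ, hσ⟩⟩ ⟨⟨g, hg⟩, ⟨τ, hτ⟩⟩ h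
    have h1 := congrArg Subtype.val h
    simp only [F] at h1
    obtain ⟨rfl, rfl⟩ := Fin.cons_inj.1 h1
    rfl
  have h := Fintype.card_le_of_injective F hF
  rw [Fintype.card_sigma] at h
  calc _ = ∑ _f : LR n k, n.factorial * (n - k) ^ n := by
        rw [Finset.sum_const, Finset.card_univ, smul_eq_mul, mul_comm]
    _ ≤ ∑ f : LR n k, n ^ n * Fintype.card {σ : Equiv.Perm (Fin n) // ∀ a i, σ i ≠ f.1 a i} :=
        Finset.sum_le_sum fun f _ => lr_ext n k hk f
    _ = n ^ n * ∑ f : LR n k, Fintype.card {σ : Equiv.Perm (Fin n) // ∀ a i, σ i ≠ f.1 a i} := by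
        rw [Finset.mul_sum]
    _ ≤ _ := by gcongr

theorem lr_bound (n t : ℕ) (ht : t ≤ n) :
    n.factorial ^ t * (n.descFactorial t) ^ n ≤ n ^ (n * t) * Fintype.card (LR n t) := by
  induction t with
  | zero =>
    have : 0 < Fintype.card (LR n 0) := Fintype.card_pos_iff.2 ⟨⟨Fin.elim0, fun a => a.elim0⟩⟩
    simp only [pow_zero, Nat.descFactorial_zero, one_pow, mul_zero, one_mul]
    omega
  | succ t ih =>
    have h1 := ih (by omega)
    have h2 := lr_succ n t (by omega)
    rw [Nat.descFactorial_succ]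
    calc n.factorial ^ (t + 1) * ((n - t) * n.descFactorial t) ^ n
        = (n.factorial * (n - t) ^ n) * (n.factorial ^ t * n.descFactorial t ^ n) := by
          rw [mul_pow]; ring
      _ ≤ (n.factorial * (n - t) ^ n) * (n ^ (n * t) * Fintype.card (LR n t)) := by gcongr
      _ = n ^ (n * t) * ((n.factorial * (n - t) ^ n) * Fintype.card (LR n t)) := by ring
      _ ≤ n ^ (n * t) * (n ^ n * Fintype.card (LR n (t + 1))) := by gcongr
      _ = _ := by ring

theorem pow_le_choose_mul (n t : ℕ) (ht : 0 < t) (htn : t ≤ n) :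
    n ^ t ≤ t ^ t * n.choose t := by
  have h1 : ∀ s, s ≤ t → n ^ s * t.descFactorial s ≤ t ^ s * n.descFactorial s := by
    intro s
    induction s with
    | zero => simp
    | succ s ih =>
      intro hs
      have h2 := ih (by omega)
      rw [Nat.descFactorial_succ, Nat.descFactorial_succ]
      have h3 : n * (t - s) ≤ t * (n - s) := by
        rw [Nat.mul_sub, Nat.mul_sub, mul_comm n t]
        exact Nat.sub_le_sub_left (Nat.mul_le_mul_right s htn) _
      calc n ^ (s + 1) * ((t - s) * t.descFactorial s)
          = (n * (t - s)) * (n ^ s * t.descFactorial s) := by ring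
        _ ≤ (t * (n - s)) * (t ^ s * n.descFactorial s) := Nat.mul_le_mul h3 h2
        _ = _ := by ring
  have h2 := h1 t le_rfl
  rw [Nat.descFactorial_self, Nat.descFactorial_eq_factorial_mul_choose] at h2
  have h3 : t.factorial * n ^ t ≤ t.factorial * (t ^ t * n.choose t) := by linarith
  exact Nat.le_of_mul_le_mul_left h3 (Nat.factorial_pos t)

open Classical in
/-- The partial Latin rectangle attached to a tuple of permutations and a choice of symbols. -/
noncomputable def plrOf {n t : ℕ} (f : Fin t → Equiv.Perm (Fin n)) (e : Fin t → Fin n) :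
    Finset (Fin n × Fin n × Fin n) :=
  Finset.univ.filter (fun x => ∃ a, e a = x.2.2 ∧ f a x.1 = x.2.1)

theorem mem_plrOf {n t : ℕ} (f : Fin t → Equiv.Perm (Fin n)) (e : Fin t → Fin n)
    (x : Fin n × Fin n × Fin n) : x ∈ plrOf f e ↔ ∃ a, e a = x.2.2 ∧ f a x.1 = x.2.1 := by
  simp [plrOf]

theorem plrOf_isPLR {n t : ℕ} (f : LR n t) (e : Fin t → Fin n) (he : Function.Injective e) :
    IsPLR (plrOf f.1 e) := by
  rintro ⟨i, j, k⟩ hx ⟨i', j', k'⟩ hx' hne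
  obtain ⟨a, ha1, ha2⟩ := (mem_plrOf _ _ _).1 hx
  obtain ⟨b, hb1, hb2⟩ := (mem_plrOf _ _ _).1 hx'
  simp only at ha1 ha2 hb1 hb2
  subst ha1 ha2 hb1 hb2
  refine ⟨?_, ?_, ?_⟩
  · rintro ⟨h1, h2⟩
    simp only at h1 h2
    subst h1
    by_cases hab : a = b
    · subst hab; exact hne rfl
    · exact f.2 a b hab i h2
  · rintro ⟨h1, h2⟩
    simp only at h1 h2
    subst h1
    have := he h2
    subst this
    exact hne rfl
  · rintro ⟨h1, h2⟩
    simp only at h1 h2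
    have := he h2
    subst this
    have := (f.1 a).injective h1
    subst this
    exact hne rfl

theorem plrOf_row {n t : ℕ} (f : LR n t) (e : Fin t → Fin n) (he : Function.Injective e)
    (i : Fin n) : rowType (plrOf f.1 e) i = t := by
  classical
  have : (plrOf f.1 e).filter (fun x => x.1 = i) = Finset.univ.image (fun a => (i, f.1 a i, e a)) := by
    ext ⟨i', j, k⟩
    simp only [Finset.mem_filter, mem_plrOf, Finset.mem_image, Finset.mem_univ, true_and,
      Prod.mk.injEq]
    constructor
    · rintro ⟨⟨a, h1, h2⟩, rfl⟩; exact ⟨a, rfl, h2, h1⟩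
    · rintro ⟨a, rfl, h2, h1⟩; exact ⟨⟨a, h1, h2⟩, rfl⟩
  rw [rowType, this, Finset.card_image_of_injective, Finset.card_univ, Fintype.card_fin]
  intro a b h
  exact he (congrArg (fun x => x.2.2) h)

theorem plrOf_col {n t : ℕ} (f : LR n t) (e : Fin t → Fin n) (he : Function.Injective e)
    (j : Fin n) : colType (plrOf f.1 e) j = t := by
  classical
  have : (plrOf f.1 e).filter (fun x => x.2.1 = j) =
      Finset.univ.image (fun a => ((f.1 a).symm j, j, e a)) := by
    ext ⟨i, j', k⟩
    simp only [Finset.mem_filter, mem_plrOf, Finset.mem_image, Finset.mem_univ, true_and,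
      Prod.mk.injEq, Equiv.symm_apply_eq]
    constructor
    · rintro ⟨⟨a, h1, h2⟩, rfl⟩; exact ⟨a, h2.symm, rfl, h1⟩
    · rintro ⟨a, h2, rfl, h1⟩; exact ⟨⟨a, h1, h2.symm⟩, rfl⟩
  rw [colType, this, Finset.card_image_of_injective, Finset.card_univ, Fintype.card_fin]
  intro a b h
  exact he (congrArg (fun x => x.2.2) h)

theorem plrOf_sym {n t : ℕ} (f : LR n t) (e : Fin t → Fin n) (he : Function.Injective e)
    (a : Fin t) : symType (plrOf f.1 e) (e a) = n := by
  classical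
  have : (plrOf f.1 e).filter (fun x => x.2.2 = e a) =
      Finset.univ.image (fun i => (i, f.1 a i, e a)) := by
    ext ⟨i, j, k⟩
    simp only [Finset.mem_filter, mem_plrOf, Finset.mem_image, Finset.mem_univ, true_and,
      Prod.mk.injEq]
    constructor
    · rintro ⟨⟨b, h1, h2⟩, rfl⟩
      have := he h1
      subst this
      exact ⟨i, rfl, h2, rfl⟩
    · rintro ⟨_, rfl, h2, rfl⟩; exact ⟨⟨a, rfl, h2⟩, rfl⟩
  rw [symType, this, Finset.card_image_of_injective, Finset.card_univ, Fintype.card_fin]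
  intro i i' h
  exact congrArg (fun x => x.1) h

theorem plrOf_sym_zero {n t : ℕ} (f : LR n t) (e : Fin t → Fin n)
    (k : Fin n) (hk : ∀ a, e a ≠ k) : symType (plrOf f.1 e) k = 0 := by
  rw [symType, Finset.card_eq_zero, Finset.filter_eq_empty_iff]
  intro x hx h
  obtain ⟨a, h1, -⟩ := (mem_plrOf _ _ _).1 hx
  exact hk a (h1.trans h)

theorem plrOf_symset {n t : ℕ} (hn : 0 < n) (f : LR n t) (e : Fin t → Fin n)
    (he : Function.Injective e) (k : Fin n) :
    symType (plrOf f.1 e) k = n ↔ k ∈ Set.range e := by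
  constructor
  · intro h
    by_contra hk
    have := plrOf_sym_zero f e k (fun a ha => hk ⟨a, ha⟩)
    omega
  · rintro ⟨a, rfl⟩; exact plrOf_sym f e he a

theorem plr_count (t n : ℕ) (hn : 0 < n) :
    n.choose t * Fintype.card (LR n t) ≤ Nat.card {E : Finset (Fin n × Fin n × Fin n) //
          IsPLR E ∧ (∀ i, rowType E i = t) ∧ (∀ j, colType E j = t) ∧
          (Finset.univ.filter (fun k => symType E k = n)).card = t ∧
          (∀ k, symType E k = n ∨ symType E k = 0)} := by
  classical
  let e : (S : {S : Finset (Fin n) // S.card = t}) → Fin t → Fin n :=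
    fun S => S.1.orderEmbOfFin S.2
  have he : ∀ S, Function.Injective (e S) := fun S => (S.1.orderEmbOfFin S.2).injective
  have hset : ∀ S (f : LR n t), Finset.univ.filter (fun k => symType (plrOf f.1 (e S)) k = n) = S.1 := by
    intro S f
    ext k
    rw [Finset.mem_filter, plrOf_symset hn f (e S) (he S)]
    simp [e]
  let F : {S : Finset (Fin n) // S.card = t} × LR n t → {E : Finset (Fin n × Fin n × Fin n) //
          IsPLR E ∧ (∀ i, rowType E i = t) ∧ (∀ j, colType E j = t) ∧
          (Finset.univ.filter (fun k => symType E k = n)).card = t ∧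
          (∀ k, symType E k = n ∨ symType E k = 0)} := fun x =>
    ⟨plrOf x.2.1 (e x.1), plrOf_isPLR _ _ (he _), plrOf_row _ _ (he _), plrOf_col _ _ (he _), by
      rw [hset, x.1.2], by
      intro k
      by_cases hk : k ∈ Set.range (e x.1)
      · left; exact (plrOf_symset hn _ _ (he _) k).2 hk
      · right; exact plrOf_sym_zero _ _ _ (fun a ha => hk ⟨a, ha⟩)⟩
  have hF : Function.Injective F := by
    rintro ⟨S, f⟩ ⟨S', f'⟩ h
    have h1 : plrOf f.1 (e S) = plrOf f'.1 (e S') := congrArg Subtype.val h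
    have hS : S = S' := by
      apply Subtype.ext
      rw [← hset S f, ← hset S' f', h1]
    subst hS
    have hf : f = f' := by
      apply Subtype.ext
      funext a
      ext1 i
      have h2 : (i, f.1 a i, e S a) ∈ plrOf f.1 (e S) := (mem_plrOf _ _ _).2 ⟨a, rfl, rfl⟩
      rw [h1] at h2
      obtain ⟨b, hb1, hb2⟩ := (mem_plrOf _ _ _).1 h2
      have := he S hb1
      subst this
      exact hb2.symm
    rw [hf]
  have h := Nat.card_le_card_of_injective F hF
  rw [Nat.card_prod, Nat.card_eq_fintype_card (α := LR n t), Nat.card_eq_fintype_card,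
    Fintype.card_finset_len, Fintype.card_fin] at h
  exact h

theorem stmt3 (t n : ℕ) (ht : 0 < t) (hn : 0 < n) (htn : t ≤ n) :
    (n.factorial) ^ t * (t.factorial) ^ n ≤
      t ^ (t * n) *
        Nat.card {E : Finset (Fin n × Fin n × Fin n) //
          IsPLR E ∧ (∀ i, rowType E i = t) ∧ (∀ j, colType E j = t) ∧
          (Finset.univ.filter (fun k => symType E k = n)).card = t ∧
          (∀ k, symType E k = n ∨ symType E k = 0)} := by
  refine le_trans ?_ (Nat.mul_le_mul_left _ (plr_count t n hn))
  have h1 := lr_bound n t htn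
  rw [Nat.descFactorial_eq_factorial_mul_choose] at h1
  have h2 := pow_le_choose_mul n t ht htn
  have hc : 1 ≤ n.choose t := Nat.choose_pos htn
  set L := Fintype.card (LR n t)
  have hpos : 0 < n ^ (n * t) := by positivity
  refine Nat.le_of_mul_le_mul_left ?_ hpos
  calc n ^ (n * t) * (n.factorial ^ t * t.factorial ^ n)
      = (n ^ t) ^ n * (n.factorial ^ t * t.factorial ^ n) := by rw [← pow_mul, mul_comm t n]
    _ ≤ (t ^ t * n.choose t) ^ n * (n.factorial ^ t * t.factorial ^ n) := by gcongr
    _ = t ^ (t * n) * (n.factorial ^ t * (t.factorial * n.choose t) ^ n) := by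
        rw [mul_pow, mul_pow, ← pow_mul]; ring
    _ ≤ t ^ (t * n) * (n ^ (n * t) * L) := by gcongr
    _ ≤ t ^ (t * n) * (n ^ (n * t) * L) * n.choose t := Nat.le_mul_of_pos_right _ hc
    _ = _ := by ring
end

section
/- For all positive integers r, s, n, the number of r×s partial Latin rectangles based on n symbols of size 5 satisfies 120·|R_{r,s,n:5}| = rsn·(σ(4,4,4) − 10σ(4,3,3) + 20σ(3,3,3) + 35σ(4,2,2) + 90σ(3,3,2) − 180σ(3,2,2) − 50σ(4,1,1) − 260σ(3,2,1) − 460σ(2,2,2) + 520σ(3,1,1) + 1350σ(2,2,1) + 24σ(4,0,0) + 240σ(3,1,0) + 480σ(2,2,0) − 320σ(2,1,1) − 480σ(3,0,0) − 2520σ(2,1,0) − 5090σ(1,1,1) + 2880σ(2,0,0) + 7440σ(1,1,0) − 6360σ(1,0,0) + 4512). -/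
open Finset

/-- The number of `r × s` partial Latin rectangles based on `n` symbols of size `m`. -/
noncomputable def numPLR (r s n m : ℕ) : ℕ :=
  Nat.card {E : Finset (Fin r × Fin s × Fin n) // IsPLR E ∧ E.card = m}

/-- `sig r s n a b c` is the sum of the distinct monomials `r^a' * s^b' * n^c'` as
`(a',b',c')` ranges over the distinct permutations of `(a,b,c)`. -/
def sig (r s n : ℤ) (a b c : ℕ) : ℤ :=
  ∑ p ∈ ({(a, b, c), (a, c, b), (b, a, c), (b, c, a), (c, a, b), (c, b, a)} :
      Finset (ℕ × ℕ × ℕ)),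
    r ^ p.1 * s ^ p.2.1 * n ^ p.2.2

/-! ### Kernel patterns of functions on five points -/

/-- The kernel relation of a function on five points. -/
def ker5 {α : Type*} (f : Fin 5 → α) : Fin 5 → Fin 5 → Prop := fun i j => f i = f j

/-- Canonical representatives of set partitions of five points:
every point is sent to the least point of its block. -/
def IsCanon (c : Fin 5 → Fin 5) : Prop := ∀ i, c i ≤ i ∧ c (c i) = c i

instance (c : Fin 5 → Fin 5) : Decidable (IsCanon c) := by unfold IsCanon; infer_instance

lemma exists_canon {α : Type*} [DecidableEq α] (f : Fin 5 → α) :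
    ∃ c, IsCanon c ∧ ker5 f = ker5 c := by
  have hne : ∀ i, (univ.filter (fun j => f j = f i)).Nonempty := fun i => ⟨i, by simp⟩
  let c : Fin 5 → Fin 5 := fun i => (univ.filter (fun j => f j = f i)).min' (hne i)
  have h1 : ∀ i, f (c i) = f i := fun i => by
    have := Finset.min'_mem _ (hne i)
    simpa using this
  have h3 : ∀ i j, f i = f j → c i = c j := fun i j h => by
    simp only [c, h]
  refine ⟨c, fun i => ⟨Finset.min'_le _ _ (by simp), h3 _ _ (h1 i)⟩, ?_⟩
  funext i j
  refine propext ⟨h3 i j, fun h => ?_⟩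
  have h' : c i = c j := h
  change f i = f j
  rw [← h1 i, ← h1 j, h']

lemma canon_unique {c d : Fin 5 → Fin 5} (hc : IsCanon c) (hd : IsCanon d)
    (h : ker5 c = ker5 d) : c = d := by
  have key : ∀ {c d : Fin 5 → Fin 5}, IsCanon c → IsCanon d → ker5 c = ker5 d →
      ∀ i, d i ≤ c i := by
    intro c d hc hd h i
    have h1 : ker5 c (c i) i := (hc i).2
    rw [h] at h1
    have h2 : d (c i) = d i := h1
    rw [← h2]
    exact (hd (c i)).1
  funext i
  exact le_antisymm (key hd hc h.symm i) (key hc hd h i)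

/-- The number of functions with a given kernel. -/
lemma card_ker {r : ℕ} (c : Fin 5 → Fin 5) [DecidablePred fun f : Fin 5 → Fin r => ker5 f = ker5 c] :
    (univ.filter (fun f : Fin 5 → Fin r => ker5 f = ker5 c)).card
      = r.descFactorial (univ.image c).card := by
  have e : ((univ.image c : Finset (Fin 5)) ↪ Fin r) ≃
      {f : Fin 5 → Fin r // ker5 f = ker5 c} := by
    refine Equiv.ofBijective (fun g => ⟨fun i => g ⟨c i, by simp⟩, ?_⟩) ⟨?_, ?_⟩
    · funext i j
      refine propext ⟨fun h => ?_, fun h => ?_⟩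
      · have := g.injective h
        exact congrArg Subtype.val this
      · have h' : c i = c j := h
        simp only [ker5, h']
    · intro g g' h
      ext ⟨x, hx⟩
      obtain ⟨i, -, rfl⟩ := Finset.mem_image.1 hx
      have := congrFun (congrArg Subtype.val h) i
      exact congrArg Fin.val this
    · rintro ⟨f, hf⟩
      have hk : ∀ i j, f i = f j ↔ c i = c j := fun i j => iff_of_eq (congrFun (congrFun hf i) j)
      have hx : ∀ x : (univ.image c : Finset (Fin 5)), ∃ i, c i = x := fun x => by
        obtain ⟨i, -, h⟩ := Finset.mem_image.1 x.2
        exact ⟨i, h⟩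
      choose p hp using hx
      refine ⟨⟨fun x => f (p x), fun x y h => ?_⟩, ?_⟩
      · have := (hk _ _).1 h
        rw [hp, hp] at this
        exact Subtype.ext this
      · apply Subtype.ext
        funext i
        exact (hk _ _).2 (hp _)
  rw [← Fintype.card_subtype, ← Fintype.card_congr e, Fintype.card_embedding_eq]
  simp only [Fintype.card_coe, Fintype.card_fin]

/-- Summing a function of the kernel. -/
lemma sum_ker (r : ℕ) (F : (Fin 5 → Fin 5 → Prop) → ℤ) :
    ∑ f : Fin 5 → Fin r, F (ker5 f) =
      ∑ c ∈ univ.filter IsCanon, (r.descFactorial (univ.image c).card : ℤ) * F (ker5 c) := by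
  classical
  choose k hk1 hk2 using fun f : Fin 5 → Fin r => exists_canon f
  rw [← Finset.sum_fiberwise_of_maps_to (t := univ.filter IsCanon) (g := k)
    (fun f _ => by simp [hk1])]
  refine Finset.sum_congr rfl fun c hc => ?_
  have hc : IsCanon c := (Finset.mem_filter.1 hc).2
  have hE : univ.filter (fun f => k f = c) =
      univ.filter (fun f : Fin 5 → Fin r => ker5 f = ker5 c) := by
    ext f
    simp only [Finset.mem_filter, Finset.mem_univ, true_and]
    exact ⟨fun h => h ▸ hk2 f, fun h => canon_unique (hk1 f) hc ((hk2 f).symm.trans h)⟩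
  rw [hE, ← card_ker, ← nsmul_eq_mul, ← Finset.sum_const]
  refine Finset.sum_congr rfl fun f hf => ?_
  rw [(Finset.mem_filter.1 hf).2]

/-! ### From rectangles to triples of functions -/

/-- Two kernels never identify the same pair of distinct points. -/
def Disj (P Q : Fin 5 → Fin 5 → Prop) : Prop := ∀ i j, i < j → ¬ (P i j ∧ Q i j)

lemma disj_ker {α β : Type*} (f : Fin 5 → α) (g : Fin 5 → β) (h : Disj (ker5 f) (ker5 g))
    {i j : Fin 5} (hij : i ≠ j) : ¬ (f i = f j ∧ g i = g j) := by
  rcases lt_or_gt_of_ne hij with h1 | h1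
  · exact h i j h1
  · exact fun h2 => h j i h1 ⟨h2.1.symm, h2.2.symm⟩

/-- An ordered tuple of five pairwise compatible triples. -/
def Good {r s n : ℕ} (e : Fin 5 → Fin r × Fin s × Fin n) : Prop :=
  Disj (ker5 fun i => (e i).1) (ker5 fun i => (e i).2.1) ∧
  Disj (ker5 fun i => (e i).1) (ker5 fun i => (e i).2.2) ∧
  Disj (ker5 fun i => (e i).2.1) (ker5 fun i => (e i).2.2)

lemma Good.injective {r s n : ℕ} {e : Fin 5 → Fin r × Fin s × Fin n} (h : Good e) :
    Function.Injective e := by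
  intro i j hij
  by_contra hne
  exact disj_ker _ _ h.1 hne ⟨by rw [hij], by rw [hij]⟩

lemma Good.isPLR {r s n : ℕ} {e : Fin 5 → Fin r × Fin s × Fin n} (h : Good e) :
    IsPLR (univ.image e) := by
  intro x hx y hy hxy
  obtain ⟨i, -, rfl⟩ := Finset.mem_image.1 hx
  obtain ⟨j, -, rfl⟩ := Finset.mem_image.1 hy
  have hij : i ≠ j := fun h => hxy (by rw [h])
  exact ⟨disj_ker _ _ h.1 hij, disj_ker _ _ h.2.1 hij, disj_ker _ _ h.2.2 hij⟩

lemma good_of_isPLR {r s n : ℕ} {e : Fin 5 → Fin r × Fin s × Fin n}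
    (h : ∀ i j, i ≠ j →
      ¬((e i).1 = (e j).1 ∧ (e i).2.1 = (e j).2.1) ∧
      ¬((e i).1 = (e j).1 ∧ (e i).2.2 = (e j).2.2) ∧
      ¬((e i).2.1 = (e j).2.1 ∧ (e i).2.2 = (e j).2.2)) : Good e :=
  ⟨fun i j hij => (h i j hij.ne).1, fun i j hij => (h i j hij.ne).2.1,
    fun i j hij => (h i j hij.ne).2.2⟩

open Classical in
lemma card_good (r s n : ℕ) :
    (univ.filter (fun e : Fin 5 → Fin r × Fin s × Fin n => Good e)).card = 120 * numPLR r s n 5 := by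
  have hn : numPLR r s n 5 = (univ.filter
      (fun E : Finset (Fin r × Fin s × Fin n) => IsPLR E ∧ E.card = 5)).card := by
    rw [numPLR, Nat.card_eq_fintype_card, Fintype.card_subtype]
  rw [hn, mul_comm]
  rw [Finset.card_eq_sum_card_fiberwise (f := fun e => univ.image e) (t := univ.filter
      (fun E : Finset (Fin r × Fin s × Fin n) => IsPLR E ∧ E.card = 5))]
  · rw [← smul_eq_mul, ← Finset.sum_const]
    refine Finset.sum_congr rfl fun E hE => ?_
    obtain ⟨hP, hc⟩ := (Finset.mem_filter.1 hE).2
    have e : (Fin 5 ≃ E) ≃ {e : Fin 5 → Fin r × Fin s × Fin n // Good e ∧ univ.image e = E} := by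
      refine Equiv.ofBijective (fun g => ⟨fun i => (g i).1, ?_, ?_⟩) ⟨?_, ?_⟩
      · have hi : Function.Injective (fun i => (g i).1) :=
          Subtype.val_injective.comp g.injective
        exact good_of_isPLR fun i j hij => hP _ (g i).2 _ (g j).2 (hi.ne hij)
      · ext x
        simp only [Finset.mem_image, Finset.mem_univ, true_and]
        exact ⟨fun ⟨i, hi⟩ => hi ▸ (g i).2, fun hx => ⟨g.symm ⟨x, hx⟩, by simp⟩⟩
      · intro g g' h
        ext1 i
        exact Subtype.ext (congrFun (congrArg Subtype.val h) i)
      · rintro ⟨f, hf, hE⟩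
        have hm : ∀ i, f i ∈ E := fun i => hE ▸ Finset.mem_image_of_mem f (Finset.mem_univ i)
        refine ⟨Equiv.ofBijective (fun i => ⟨f i, hm i⟩) ⟨fun i j h => ?_, ?_⟩, ?_⟩
        · exact hf.injective (congrArg Subtype.val h)
        · rintro ⟨x, hx⟩
          rw [← hE] at hx
          obtain ⟨i, -, rfl⟩ := Finset.mem_image.1 hx
          exact ⟨i, rfl⟩
        · rfl
    rw [Finset.filter_filter, ← Fintype.card_subtype, ← Fintype.card_congr e,
      Fintype.card_equiv (Fintype.equivOfCardEq (by simp [hc]))]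
    simp [Nat.factorial]
  · intro e he
    have he : Good e := (Finset.mem_filter.1 he).2
    simp only [Finset.coe_filter, Finset.mem_univ, true_and, Set.mem_ofPred_eq]
    exact ⟨he.isPLR, by rw [Finset.card_image_of_injective _ he.injective]; simp⟩

open Classical in
/-- The indicator of pairwise disjointness of three kernels. -/
noncomputable def ind (P Q R : Fin 5 → Fin 5 → Prop) : ℤ :=
  if Disj P Q ∧ Disj P R ∧ Disj Q R then 1 else 0

lemma count_eq (r s n : ℕ) : (120 : ℤ) * numPLR r s n 5 =
    ∑ f : Fin 5 → Fin r, ∑ g : Fin 5 → Fin s, ∑ h : Fin 5 → Fin n,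
      ind (ker5 f) (ker5 g) (ker5 h) := by
  classical
  have h1 : ((120 * numPLR r s n 5 : ℕ) : ℤ) =
      ∑ e : Fin 5 → Fin r × Fin s × Fin n, if Good e then 1 else 0 := by
    rw [← card_good, Finset.card_filter]
    push_cast
    refine Finset.sum_congr rfl fun e _ => ?_
    congr
  push_cast at h1
  rw [h1]
  let φ : (Fin 5 → Fin r × Fin s × Fin n) ≃
      (Fin 5 → Fin r) × (Fin 5 → Fin s) × (Fin 5 → Fin n) :=
    { toFun := fun e => (fun i => (e i).1, fun i => (e i).2.1, fun i => (e i).2.2)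
      invFun := fun p i => (p.1 i, p.2.1 i, p.2.2 i)
      left_inv := fun _ => rfl
      right_inv := fun _ => rfl }
  rw [Fintype.sum_equiv φ _ (fun p => ind (ker5 p.1) (ker5 p.2.1) (ker5 p.2.2))]
  · rw [Fintype.sum_prod_type]
    refine Finset.sum_congr rfl fun f _ => ?_
    rw [Fintype.sum_prod_type]
  · intro e
    exact if_congr Iff.rfl rfl rfl

/-- The reduction to a finite sum over triples of set partitions. -/
lemma count_canon (r s n : ℕ) : (120 : ℤ) * numPLR r s n 5 =
    ∑ c ∈ univ.filter IsCanon, (r.descFactorial (univ.image c).card : ℤ) *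
      ∑ d ∈ univ.filter IsCanon, (s.descFactorial (univ.image d).card : ℤ) *
        ∑ e ∈ univ.filter IsCanon, (n.descFactorial (univ.image e).card : ℤ) *
          ind (ker5 c) (ker5 d) (ker5 e) := by
  rw [count_eq]
  have h1 : ∀ (f : Fin 5 → Fin r) (g : Fin 5 → Fin s), _ := fun f g =>
    sum_ker n (fun R => ind (ker5 f) (ker5 g) R)
  simp only [h1]
  have h2 : ∀ (f : Fin 5 → Fin r), _ := fun f => sum_ker s (fun Q =>
    ∑ e ∈ univ.filter IsCanon, (n.descFactorial (univ.image e).card : ℤ) *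
      ind (ker5 f) Q (ker5 e))
  simp only [h2]
  exact sum_ker r (fun P =>
    ∑ d ∈ univ.filter IsCanon, (s.descFactorial (univ.image d).card : ℤ) *
      ∑ e ∈ univ.filter IsCanon, (n.descFactorial (univ.image e).card : ℤ) *
        ind P (ker5 d) (ker5 e))

/-! ### Enumeration of the set partitions of five points -/

/-- A function on five points given by its values. -/
def mk5 (a b c d e : Fin 5) : Fin 5 → Fin 5 := fun i => match i with
  | 0 => a
  | 1 => b
  | 2 => c
  | 3 => d
  | 4 => e

/-- All canonical functions. -/
def canonList : List (Fin 5 → Fin 5) :=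
  (([0, 1] : List (Fin 5)).flatMap fun b => ([0, 1, 2] : List (Fin 5)).flatMap fun c =>
    ([0, 1, 2, 3] : List (Fin 5)).flatMap fun d => ([0, 1, 2, 3, 4] : List (Fin 5)).map fun e =>
      mk5 0 b c d e).filter fun c => decide (IsCanon c)

/-- The number of blocks. -/
def blk (c : Fin 5 → Fin 5) : ℕ := (univ.image c).card

/-- The set of identified pairs, as a bit mask. -/
def mask (c : Fin 5 → Fin 5) : ℕ :=
  (if c 0 = c 1 then 1 else 0) +
    (if c 0 = c 2 then 2 else 0) +
    (if c 0 = c 3 then 4 else 0) +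
    (if c 0 = c 4 then 8 else 0) +
    (if c 1 = c 2 then 16 else 0) +
    (if c 1 = c 3 then 32 else 0) +
    (if c 1 = c 4 then 64 else 0) +
    (if c 2 = c 3 then 128 else 0) +
    (if c 2 = c 4 then 256 else 0) +
    (if c 3 = c 4 then 512 else 0)

lemma mem_canonList (c : Fin 5 → Fin 5) : c ∈ canonList ↔ IsCanon c := by
  constructor
  · intro h
    exact of_decide_eq_true (List.mem_filter.1 h).2
  · intro h
    refine List.mem_filter.2 ⟨?_, decide_eq_true h⟩
    have h0 : ∀ a : Fin 5, a ≤ 0 → a = 0 := by decide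
    have h1 : ∀ a : Fin 5, a ≤ 1 → a ∈ ([0, 1] : List (Fin 5)) := by decide
    have h2 : ∀ a : Fin 5, a ≤ 2 → a ∈ ([0, 1, 2] : List (Fin 5)) := by decide
    have h3 : ∀ a : Fin 5, a ≤ 3 → a ∈ ([0, 1, 2, 3] : List (Fin 5)) := by decide
    have h4 : ∀ a : Fin 5, a ∈ ([0, 1, 2, 3, 4] : List (Fin 5)) := by decide
    have hc : c = mk5 (c 0) (c 1) (c 2) (c 3) (c 4) := by
      funext i
      fin_cases i <;> rfl
    rw [hc, h0 _ (h 0).1]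
    exact List.mem_flatMap.2 ⟨_, h1 _ (h 1).1, List.mem_flatMap.2 ⟨_, h2 _ (h 2).1,
      List.mem_flatMap.2 ⟨_, h3 _ (h 3).1, List.mem_map.2 ⟨_, h4 _, rfl⟩⟩⟩⟩

lemma nodup_canonList : canonList.Nodup := by
  have h : (canonList.map fun c : Fin 5 → Fin 5 => (c 1).val + 5 * (c 2).val + 25 * (c 3).val +
      125 * (c 4).val).Nodup := by decide +kernel
  exact h.of_map

lemma mask_lt : ∀ c ∈ canonList, mask c < 2 ^ 10 := by
  have h : (canonList.all fun c => decide (mask c < 2 ^ 10)) = true := by decide +kernel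
  exact fun c hc => of_decide_eq_true (List.all_eq_true.1 h c hc)

/-- The bit position of a pair of points. -/
def pos : ℕ → Fin 5 × Fin 5
  | 0 => (0, 1)
  | 1 => (0, 2)
  | 2 => (0, 3)
  | 3 => (0, 4)
  | 4 => (1, 2)
  | 5 => (1, 3)
  | 6 => (1, 4)
  | 7 => (2, 3)
  | 8 => (2, 4)
  | 9 => (3, 4)
  | _ => (0, 1)

lemma testBit_mask : ∀ c ∈ canonList, ∀ k < 10,
    ((mask c).testBit k = true ↔ c (pos k).1 = c (pos k).2) := by
  have h : (canonList.all fun c => (List.range 10).all fun k =>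
      decide ((mask c).testBit k = true ↔ c (pos k).1 = c (pos k).2)) = true := by decide +kernel
  exact fun c hc k hk => of_decide_eq_true
    (List.all_eq_true.1 (List.all_eq_true.1 h c hc) k (List.mem_range.2 hk))

lemma pos_surj : ∀ i j : Fin 5, i < j → ∃ k < 10, pos k = (i, j) := by decide +kernel

lemma pos_lt : ∀ k < 10, (pos k).1 < (pos k).2 := by decide +kernel

lemma disj_mask (c : Fin 5 → Fin 5) (hc : c ∈ canonList) (d : Fin 5 → Fin 5)
    (hd : d ∈ canonList) : Disj (ker5 c) (ker5 d) ↔ mask c &&& mask d = 0 := by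
  constructor
  · intro h
    apply Nat.eq_of_testBit_eq
    intro k
    rw [Nat.testBit_and, Nat.zero_testBit, Bool.and_eq_false_iff]
    by_contra! hk
    rw [Bool.ne_false_iff, Bool.ne_false_iff] at hk
    have hk10 : k < 10 := by
      by_contra! hge
      have := Nat.testBit_lt_two_pow
        (lt_of_lt_of_le (mask_lt c hc) (Nat.pow_le_pow_right (by norm_num) hge))
      simp [this] at hk
    exact h _ _ (pos_lt k hk10)
      ⟨(testBit_mask c hc k hk10).1 hk.1, (testBit_mask d hd k hk10).1 hk.2⟩
  · rintro h i j hij ⟨h1, h2⟩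
    obtain ⟨k, hk, hp⟩ := pos_surj i j hij
    have e1 := (testBit_mask c hc k hk).2 (by rw [hp]; exact h1)
    have e2 := (testBit_mask d hd k hk).2 (by rw [hp]; exact h2)
    have := Nat.testBit_and (mask c) (mask d) k
    rw [h, e1, e2] at this
    simp at this

lemma blk_lt : ∀ c ∈ canonList, blk c < 6 := by
  have h : (canonList.all fun c => decide (blk c < 6)) = true := by decide +kernel
  exact fun c hc => of_decide_eq_true (List.all_eq_true.1 h c hc)

/-- The masks of the set partitions with a given number of blocks. -/
def maskList : ℕ → List ℕ
  | 1 => [1023]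
  | 2 => [183, 347, 531, 621, 293, 201, 897, 910, 198, 298, 610, 540, 340, 184, 1008]
  | 3 => [19, 37, 129, 73, 257, 513, 134, 34, 266, 66, 514, 20, 176, 24, 336, 528, 524, 68, 260, 40, 608, 288, 136, 192, 896]
  | 4 => [1, 2, 16, 4, 32, 128, 8, 64, 256, 512]
  | 5 => [0]
  | _ => []

lemma maskList_eq : ∀ a < 6,
    (canonList.filter fun c => decide (blk c = a)).map mask = maskList a := by
  decide +kernel

/-- The number of triples of pairwise disjoint set partitions with given numbers of blocks. -/
def triples (a b e : ℕ) : ℕ :=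
  ((maskList a).map fun p => ((maskList b).map fun q =>
    bif Nat.beq (Nat.land p q) 0 then
      ((maskList e).map fun t =>
        bif Nat.beq (Nat.land p t) 0 then (bif Nat.beq (Nat.land q t) 0 then 1 else 0) else 0).sum
    else 0).sum).sum

/-- The values of `triples`. -/
def table : List (List (List ℕ)) :=
  [[[0, 0, 0, 0, 0, 0], [0, 0, 0, 0, 0, 0], [0, 0, 0, 0, 0, 0], [0, 0, 0, 0, 0, 0], [0, 0, 0, 0, 0, 0], [0, 0, 0, 0, 0, 0]],
   [[0, 0, 0, 0, 0, 0], [0, 0, 0, 0, 0, 0], [0, 0, 0, 0, 0, 0], [0, 0, 0, 0, 0, 0], [0, 0, 0, 0, 0, 0], [0, 0, 0, 0, 0, 1]],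
   [[0, 0, 0, 0, 0, 0], [0, 0, 0, 0, 0, 0], [0, 0, 0, 0, 0, 0], [0, 0, 0, 180, 240, 60], [0, 0, 0, 240, 360, 80], [0, 0, 0, 60, 80, 15]],
   [[0, 0, 0, 0, 0, 0], [0, 0, 0, 0, 0, 0], [0, 0, 0, 180, 240, 60], [0, 0, 180, 1590, 1620, 300], [0, 0, 240, 1620, 1260, 190], [0, 0, 60, 300, 190, 25]],
   [[0, 0, 0, 0, 0, 0], [0, 0, 0, 0, 0, 0], [0, 0, 0, 240, 360, 80], [0, 0, 240, 1620, 1260, 190], [0, 0, 360, 1260, 720, 90], [0, 0, 80, 190, 90, 10]],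
   [[0, 0, 0, 0, 0, 0], [0, 0, 0, 0, 0, 1], [0, 0, 0, 60, 80, 15], [0, 0, 60, 300, 190, 25], [0, 0, 80, 190, 90, 10], [0, 1, 15, 25, 10, 1]]]

lemma triples_eq : ((List.range 6).map fun a => (List.range 6).map fun b =>
    (List.range 6).map fun e => triples a b e) = table := by
  decide +kernel

/-- The set of canonical functions with a given number of blocks. -/
def canonSet (a : ℕ) : Finset (Fin 5 → Fin 5) := (univ.filter IsCanon).filter fun c => blk c = a

lemma canonSet_eq (a : ℕ) :
    canonSet a = (canonList.filter fun c => decide (blk c = a)).toFinset := by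
  ext c
  simp [canonSet, mem_canonList]

lemma sum_canonSet {a : ℕ} (ha : a < 6) (F : ℕ → ℤ) :
    ∑ c ∈ canonSet a, F (mask c) = ((maskList a).map F).sum := by
  rw [canonSet_eq, List.sum_toFinset _ (nodup_canonList.filter _), ← maskList_eq a ha,
    List.map_map]
  rfl

lemma mem_of_canonSet {a : ℕ} {c : Fin 5 → Fin 5} (h : c ∈ canonSet a) : c ∈ canonList := by
  simp only [canonSet, Finset.mem_filter] at h
  exact (mem_canonList c).2 h.1.2

lemma sum_ind {a b e : ℕ} (ha : a < 6) (hb : b < 6) (he : e < 6) :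
    ∑ c ∈ canonSet a, ∑ d ∈ canonSet b, ∑ f ∈ canonSet e, ind (ker5 c) (ker5 d) (ker5 f)
      = (triples a b e : ℤ) := by
  have h1 : ∀ c ∈ canonSet a, ∀ d ∈ canonSet b, ∀ f ∈ canonSet e,
      ind (ker5 c) (ker5 d) (ker5 f) = if mask c &&& mask d = 0 then
        (if mask c &&& mask f = 0 then (if mask d &&& mask f = 0 then 1 else 0) else 0) else 0 := by
    intro c hc d hd f hf
    simp only [ind, disj_mask c (mem_of_canonSet hc) d (mem_of_canonSet hd),
      disj_mask c (mem_of_canonSet hc) f (mem_of_canonSet hf),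
      disj_mask d (mem_of_canonSet hd) f (mem_of_canonSet hf)]
    split_ifs <;> simp_all
  rw [Finset.sum_congr rfl fun c hc => Finset.sum_congr rfl fun d hd =>
    Finset.sum_congr rfl fun f hf => h1 c hc d hd f hf]
  have h2 : ∀ p q : ℕ, (∑ f ∈ canonSet e, if p &&& q = 0 then
        (if p &&& mask f = 0 then (if q &&& mask f = 0 then (1 : ℤ) else 0) else 0) else 0) =
      if p &&& q = 0 then ((maskList e).map fun t =>
        if p &&& t = 0 then (if q &&& t = 0 then (1 : ℤ) else 0) else 0).sum else 0 := by
    intro p q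
    split_ifs
    · exact sum_canonSet he fun t => if p &&& t = 0 then (if q &&& t = 0 then (1 : ℤ) else 0) else 0
    · simp
  simp only [h2]
  have h3 : ∀ p : ℕ, _ := fun p => sum_canonSet hb (fun q => 
      if p &&& q = 0 then ((maskList e).map fun t =>
        if p &&& t = 0 then (if q &&& t = 0 then (1 : ℤ) else 0) else 0).sum else 0)
  simp only [h3]
  rw [sum_canonSet ha (fun p => ((maskList b).map fun q =>
      if p &&& q = 0 then ((maskList e).map fun t =>
        if p &&& t = 0 then (if q &&& t = 0 then (1 : ℤ) else 0) else 0).sum else 0).sum)]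
  have hl : ∀ x y : ℕ, Nat.land x y = x &&& y := fun _ _ => rfl
  simp only [triples, hl, cond_eq_ite, Nat.beq_eq, Nat.cast_list_sum, List.map_map, Function.comp_def, Nat.cast_ite,
    Nat.cast_one, Nat.cast_zero]

lemma sum_blk (D : ℕ → ℤ) (F : (Fin 5 → Fin 5) → ℤ) :
    ∑ c ∈ univ.filter IsCanon, D (univ.image c).card * F c =
      ∑ a ∈ range 6, D a * ∑ c ∈ canonSet a, F c := by
  rw [← Finset.sum_fiberwise_of_maps_to (t := range 6) (g := blk) (fun c hc => by
    have : IsCanon c := (Finset.mem_filter.1 hc).2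
    exact Finset.mem_range.2 (blk_lt c ((mem_canonList c).2 this)))]
  refine Finset.sum_congr rfl fun a _ => ?_
  rw [Finset.mul_sum]
  refine Finset.sum_congr rfl fun c hc => ?_
  have : blk c = a := (Finset.mem_filter.1 hc).2
  rw [← this]
  rfl

lemma pull (D : ℕ → ℤ) (S : Finset (Fin 5 → Fin 5)) (G : (Fin 5 → Fin 5) → ℕ → ℤ) :
    ∑ c ∈ S, ∑ b ∈ range 6, D b * G c b = ∑ b ∈ range 6, D b * ∑ c ∈ S, G c b := by
  rw [Finset.sum_comm]
  simp only [Finset.mul_sum]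

lemma count_table (r s n : ℕ) : (120 : ℤ) * numPLR r s n 5 =
    ∑ a ∈ range 6, (r.descFactorial a : ℤ) * ∑ b ∈ range 6, (s.descFactorial b : ℤ) *
      ∑ e ∈ range 6, (n.descFactorial e : ℤ) * triples a b e := by
  rw [count_canon, sum_blk (fun a => (r.descFactorial a : ℤ))]
  refine Finset.sum_congr rfl fun a ha => ?_
  congr 1
  simp only [sum_blk (fun a => (s.descFactorial a : ℤ)), sum_blk (fun a => (n.descFactorial a : ℤ))]
  rw [pull]
  refine Finset.sum_congr rfl fun b hb => ?_
  congr 1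
  simp only [pull]
  refine Finset.sum_congr rfl fun e he => ?_
  congr 1
  exact sum_ind (Finset.mem_range.1 ha) (Finset.mem_range.1 hb) (Finset.mem_range.1 he)

lemma cast_desc (r k : ℕ) :
    ((r.descFactorial (k + 1) : ℕ) : ℤ) = ((r : ℤ) - k) * (r.descFactorial k : ℤ) := by
  rw [Nat.descFactorial_succ]
  rcases le_or_gt k r with h | h
  · push_cast [h]; ring
  · rw [Nat.descFactorial_of_lt h]; simp

theorem stmt7 (r s n : ℕ) (hr : 0 < r) (hs : 0 < s) (hn : 0 < n) :
    (120 : ℤ) * numPLR r s n 5 =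
      (r : ℤ) * s * n *
        (sig r s n 4 4 4 - 10 * sig r s n 4 3 3 + 20 * sig r s n 3 3 3
          + 35 * sig r s n 4 2 2 + 90 * sig r s n 3 3 2 - 180 * sig r s n 3 2 2
          - 50 * sig r s n 4 1 1 - 260 * sig r s n 3 2 1 - 460 * sig r s n 2 2 2
          + 520 * sig r s n 3 1 1 + 1350 * sig r s n 2 2 1 + 24 * sig r s n 4 0 0
          + 240 * sig r s n 3 1 0 + 480 * sig r s n 2 2 0 - 320 * sig r s n 2 1 1
          - 480 * sig r s n 3 0 0 - 2520 * sig r s n 2 1 0 - 5090 * sig r s n 1 1 1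
          + 2880 * sig r s n 2 0 0 + 7440 * sig r s n 1 1 0 - 6360 * sig r s n 1 0 0
          + 4512) := by
  rw [count_table]
  have ht := triples_eq
  simp only [List.range_succ, List.range_zero, List.nil_append, List.cons_append, List.map_cons,
    List.map_nil, table, List.cons.injEq, and_true, and_assoc] at ht
  simp only [Finset.sum_range_succ, Finset.sum_range_zero, ht]
  simp only [cast_desc, Nat.descFactorial_zero]
  simp [sig]
  ring
end
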